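/- arXiv:2302.13532 — 2 statements merged into one kernel-verified Lean document; each statement's English description precedes it below -/
import Mathlib

section
/- Let N ≥ 1, M ≥ 2, and let c ⊆ {0,…,N−1}. The orthogonal complement, within W_c, of the span of ⋃_{c′ ⊊ c} W_{c′} is a subspace U_c of dimension (M−1)^{|c|}. Equivalently, M^{|c|} − Σ_{j=0}^{|c|−1} C(|c|,j)(M−1)^{j} = (M−1)^{|c|}, realised as the dimension of the interaction subspace U_c. -/
open scoped Classical

/-- `Wdep ι M s` is the subspace of tables `f : (ι → Fin M) → ℝ` that depend only on the
coordinates in `s`. -/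
noncomputable def Wdep (ι : Type*) [Fintype ι] (M : ℕ) (s : Finset ι) :
    Submodule ℝ (EuclideanSpace ℝ (ι → Fin M)) where
  carrier := {f | ∀ x y : ι → Fin M, (∀ j ∈ s, x j = y j) → f x = f y}
  add_mem' := by
    intro f g hf hg x y h
    simp [PiLp.add_apply, hf x y h, hg x y h]
  zero_mem' := by intro x y h; simp
  smul_mem' := by
    intro r f hf x y h
    simp [PiLp.smul_apply, hf x y h]

/-- `Udep ι M s` is the interaction subspace: the orthogonal complement, within `Wdep ι M s`,
of the span of the union of the `Wdep ι M t` over all proper subsets `t ⊊ s`. -/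
noncomputable def Udep (ι : Type*) [Fintype ι] (M : ℕ) (s : Finset ι) :
    Submodule ℝ (EuclideanSpace ℝ (ι → Fin M)) :=
  Wdep ι M s ⊓ (⨆ (t : Finset ι) (_ : t ⊂ s), Wdep ι M t)ᗮ

lemma aux_sum_update {N M : ℕ} (j : Fin N) (F : (Fin N → Fin M) → ℝ) :
    ∑ x, ∑ a, F (Function.update x j a) = M * ∑ x, F x := by
  have h1 : ∑ p : (Fin N → Fin M) × Fin M, F (Function.update p.1 j p.2)
      = ∑ p : (Fin N → Fin M) × Fin M, F p.1 := by
    refine Finset.sum_nbij' (fun p => (Function.update p.1 j p.2, p.1 j))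
      (fun p => (Function.update p.1 j p.2, p.1 j)) ?_ ?_ ?_ ?_ ?_ <;> simp
  rw [Fintype.sum_prod_type, Fintype.sum_prod_type] at h1
  rw [h1, Finset.mul_sum]
  simp

lemma aux_mem_U {N M : ℕ} (hM : 0 < M) (c : Finset (Fin N))
    (f : EuclideanSpace ℝ (Fin N → Fin M)) :
    f ∈ Udep (Fin N) M c ↔ (∀ x y : Fin N → Fin M, (∀ j ∈ c, x j = y j) → f x = f y) ∧
      ∀ j ∈ c, ∀ x, ∑ a, f (Function.update x j a) = 0 := by
  have hM' : (M : ℝ) ≠ 0 := by positivity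
  unfold Udep
  rw [Submodule.mem_inf]
  constructor
  · rintro ⟨hW, hO⟩
    refine ⟨hW, fun j hj => ?_⟩
    have hW' : ∀ x y : Fin N → Fin M, (∀ j ∈ c, x j = y j) → f x = f y := hW
    let g : EuclideanSpace ℝ (Fin N → Fin M) :=
      WithLp.toLp 2 (fun x => ∑ a, f (Function.update x j a))
    have hg : ∀ x, g x = ∑ a, f (Function.update x j a) := fun x => rfl
    have hgW : g ∈ Wdep (Fin N) M (c.erase j) := by
      intro x y hxy
      rw [hg, hg]
      refine Finset.sum_congr rfl fun a _ => hW' _ _ fun i hi => ?_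
      by_cases hij : i = j
      · subst hij; simp
      · simp [hij, hxy i (Finset.mem_erase.2 ⟨hij, hi⟩)]
    have hgS : g ∈ (⨆ (t : Finset (Fin N)) (_ : t ⊂ c), Wdep (Fin N) M t) :=
      Submodule.mem_iSup_of_mem (c.erase j)
        (Submodule.mem_iSup_of_mem (Finset.erase_ssubset hj) hgW)
    have h0 := hO g hgS
    have h0' : ∑ x, f x * g x = 0 := by
      simp only [PiLp.inner_apply] at h0
      convert h0 using 2
      · ext x; simp
      · simp
    have h1 := aux_sum_update j (fun x => f x * g x)
    rw [h0', mul_zero] at h1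
    have h2 : ∑ x, g x * g x = 0 := by
      rw [← h1]
      refine Finset.sum_congr rfl fun x _ => ?_
      have : ∀ a, g (Function.update x j a) = g x := fun a => by simp [hg]
      simp only [this]
      rw [← Finset.sum_mul, ← hg]
    intro x
    rw [← hg]
    have := (Finset.sum_eq_zero_iff_of_nonneg (fun x _ => mul_self_nonneg (g x))).1 h2 x
      (Finset.mem_univ _)
    exact mul_self_eq_zero.1 this
  · rintro ⟨hW, hS⟩
    refine ⟨hW, ?_⟩
    have hle : (⨆ (t : Finset (Fin N)) (_ : t ⊂ c), Wdep (Fin N) M t) ≤ (ℝ ∙ f)ᗮ := by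
      refine iSup₂_le fun t ht g hg => ?_
      have hg' : ∀ x y : Fin N → Fin M, (∀ j ∈ t, x j = y j) → g x = g y := hg
      rw [Submodule.mem_orthogonal_singleton_iff_inner_right]
      obtain ⟨j, hj, hjt⟩ := Finset.exists_of_ssubset ht
      have h1 := aux_sum_update j (fun x => f x * g x)
      have h2 : ∑ x, f x * g x = 0 := by
        have h3 : (M : ℝ) * ∑ x, f x * g x = 0 := by
          rw [← h1]
          refine Finset.sum_eq_zero fun x _ => ?_
          have : ∀ a, g (Function.update x j a) = g x := fun a => by
            apply hg'
            intro i hi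
            have : i ≠ j := by rintro rfl; exact hjt hi
            simp [this]
          simp only [this]
          rw [← Finset.sum_mul, hS j hj, zero_mul]
        exact (mul_eq_zero.1 h3).resolve_left hM'
      simpa [PiLp.inner_apply, mul_comm] using h2
    intro g hg
    have := hle hg
    rw [Submodule.mem_orthogonal_singleton_iff_inner_left] at this
    convert this

/-- The cell with nonzero entries on `c` prescribed by `z`. -/
def auxCell {N m : ℕ} (c : Finset (Fin N)) (z : c → Fin m) : Fin N → Fin (m + 1) :=
  fun j => if h : j ∈ c then (z ⟨j, h⟩).succ else 0

/-- Restriction of a table in `U_c` to the nonzero cells. -/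
noncomputable def auxR {N m : ℕ} (c : Finset (Fin N)) :
    Udep (Fin N) (m + 1) c →ₗ[ℝ] ((c → Fin m) → ℝ) where
  toFun f := fun z => f.1 (auxCell c z)
  map_add' f g := by ext z; simp
  map_smul' r f := by ext z; simp

lemma auxR_inj {N m : ℕ} (c : Finset (Fin N)) :
    Function.Injective (auxR (m := m) c) := by
  rw [injective_iff_map_eq_zero]
  rintro ⟨f, hf⟩ h0
  obtain ⟨hW, hS⟩ := (aux_mem_U (Nat.succ_pos m) c f).1 hf
  have hz : ∀ z : c → Fin m, f (auxCell c z) = 0 := fun z => congrFun h0 z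
  have key : ∀ n : ℕ, ∀ x : Fin N → Fin (m + 1), (c.filter (fun j => x j = 0)).card = n →
      f x = 0 := by
    intro n
    induction n with
    | zero =>
      intro x hx
      rw [Finset.card_eq_zero, Finset.filter_eq_empty_iff] at hx
      rw [← hz (fun j => (x j).pred (hx j.2))]
      apply hW
      intro j hj
      simp [auxCell, hj]
    | succ n ih =>
      intro x hx
      obtain ⟨j, hj⟩ : (c.filter (fun j => x j = 0)).Nonempty := by
        rw [← Finset.card_pos]; omega
      have hj' := Finset.mem_filter.1 hj
      have h1 := hS j hj'.1 x
      rw [Fin.sum_univ_succ] at h1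
      rw [Finset.sum_eq_zero, add_zero] at h1
      · rwa [← hj'.2, Function.update_eq_self] at h1
      · intro a _
        apply ih
        have : c.filter (fun i => Function.update x j a.succ i = 0)
            = (c.filter (fun i => x i = 0)).erase j := by
          ext i
          by_cases hij : i = j
          · subst hij; simp
          · simp [hij]
        rw [this, Finset.card_erase_of_mem hj, hx]
        simp
  ext x
  exact key _ x rfl

/-- Contrast coefficients. -/
def auxE {m : ℕ} (b : Fin m) (a : Fin (m + 1)) : ℝ :=
  Fin.cases (-1) (fun a' => if b = a' then 1 else 0) a

lemma auxE_sum {m : ℕ} (b : Fin m) : ∑ a, auxE b a = 0 := by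
  rw [Fin.sum_univ_succ]
  simp [auxE]

lemma auxR_surj {N m : ℕ} (c : Finset (Fin N)) :
    Function.Surjective (auxR (m := m) c) := by
  intro h
  let f : EuclideanSpace ℝ (Fin N → Fin (m + 1)) :=
    WithLp.toLp 2 (fun x => ∑ y : c → Fin m, h y * ∏ j : c, auxE (y j) (x j))
  have hf : ∀ x, f x = ∑ y : c → Fin m, h y * ∏ j : c, auxE (y j) (x j) := fun x => rfl
  have hfU : f ∈ Udep (Fin N) (m + 1) c := by
    rw [aux_mem_U (Nat.succ_pos m)]
    constructor
    · intro x y hxy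
      rw [hf, hf]
      refine Finset.sum_congr rfl fun z _ => ?_
      congr 1
      exact Finset.prod_congr rfl fun j _ => by rw [hxy j j.2]
    · intro j hj x
      simp only [hf]
      rw [Finset.sum_comm]
      refine Finset.sum_eq_zero fun y _ => ?_
      rw [← Finset.mul_sum]
      have : ∀ a, ∏ i : c, auxE (y i) (Function.update x j a i)
          = auxE (y ⟨j, hj⟩) a * ∏ i ∈ Finset.univ.erase (⟨j, hj⟩ : c), auxE (y i) (x i) := by
        intro a
        rw [← Finset.mul_prod_erase Finset.univ _ (Finset.mem_univ (⟨j, hj⟩ : c))]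
        congr 1
        · simp
        · refine Finset.prod_congr rfl fun i hi => ?_
          have : (i : Fin N) ≠ j := fun e => (Finset.mem_erase.1 hi).1 (Subtype.ext e)
          simp [this]
      simp only [this]
      rw [← Finset.sum_mul, auxE_sum, zero_mul, mul_zero]
  refine ⟨⟨f, hfU⟩, ?_⟩
  ext z
  change f (auxCell c z) = h z
  rw [hf, Finset.sum_eq_single z]
  · rw [Finset.prod_eq_one, mul_one]
    intro j _
    simp [auxCell, auxE]
  · intro y _ hy
    obtain ⟨j, hj⟩ := Function.ne_iff.1 hy
    rw [Finset.prod_eq_zero (Finset.mem_univ j), mul_zero]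
    simp [auxCell, auxE, hj]
  · simp

/-- The interaction subspace `U_c` (the orthogonal complement within `W_c` of
the span of `⋃_{c' ⊊ c} W_{c'}`) has dimension `(M - 1) ^ |c|`; equivalently
`M ^ |c| - ∑_{j < |c|} C(|c|, j) * (M - 1) ^ j = (M - 1) ^ |c|`, realised as the dimension of
`U_c`. -/
theorem finrank_interaction_subspace (N M : ℕ) (hN : 1 ≤ N) (hM : 2 ≤ M)
    (c : Finset (Fin N)) :
    Module.finrank ℝ (Udep (Fin N) M c) = (M - 1) ^ c.card ∧
      M ^ c.card - ∑ j ∈ Finset.range c.card, c.card.choose j * (M - 1) ^ j =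
        (M - 1) ^ c.card := by
  obtain ⟨m, rfl⟩ : ∃ m, M = m + 1 := ⟨M - 1, by omega⟩
  simp only [Nat.add_sub_cancel]
  constructor
  · rw [(LinearEquiv.ofBijective (auxR (m := m) c) ⟨auxR_inj c, auxR_surj c⟩).finrank_eq]
    simp
  · have h : (m + 1) ^ c.card
        = ∑ j ∈ Finset.range c.card, c.card.choose j * m ^ j + m ^ c.card := by
      rw [add_pow, Finset.sum_range_succ]
      simp [mul_comm]
    rw [h, Nat.add_sub_cancel_left]
end

section
/- Let A > 0 and define y(x) = log(A − e^x) on the interval (−∞, log A). Then the curvature κ(x) = |y″(x)| / (1 + y′(x)²)^{3/2} attains its global maximum value 2^{−1/2} uniquely at x = log(A/2); i.e., κ(x) ≤ 1/√2 for all x < log A, with equality if and only if x = log(A/2). -/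
lemma curv_aux (t : ℝ) (ht : 0 < t) :
    t * (1 + t) / (1 + t ^ 2) ^ ((3 : ℝ) / 2) ≤ (2 : ℝ) ^ (-(1 : ℝ) / 2) ∧
    (t * (1 + t) / (1 + t ^ 2) ^ ((3 : ℝ) / 2) = (2 : ℝ) ^ (-(1 : ℝ) / 2) ↔ t = 1) := by
  have hD : 0 < 1 + t ^ 2 := by positivity
  have hk : 0 ≤ t * (1 + t) / (1 + t ^ 2) ^ ((3 : ℝ) / 2) := by positivity
  have hc : 0 ≤ (2 : ℝ) ^ (-(1 : ℝ) / 2) := by positivity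
  have hc2 : ((2 : ℝ) ^ (-(1 : ℝ) / 2)) ^ 2 = 1 / 2 := by
    rw [← Real.rpow_natCast, ← Real.rpow_mul (by norm_num)]
    norm_num [Real.rpow_neg_one]
  have hd2 : ((1 + t ^ 2) ^ ((3 : ℝ) / 2)) ^ 2 = (1 + t ^ 2) ^ 3 := by
    rw [← Real.rpow_natCast, ← Real.rpow_mul hD.le, ← Real.rpow_natCast]
    norm_num
  have key : (1 + t ^ 2) ^ 3 - 2 * (t * (1 + t)) ^ 2
      = (t - 1) ^ 2 * ((1 + t ^ 2) * (t + 1) ^ 2 + 2 * t ^ 2) := by ring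
  constructor
  · rw [← sq_le_sq₀ hk hc, hc2, div_pow, hd2, div_le_div_iff₀ (by positivity) (by norm_num)]
    have : 0 ≤ (t - 1) ^ 2 * ((1 + t ^ 2) * (t + 1) ^ 2 + 2 * t ^ 2) := by positivity
    linarith
  · rw [← sq_eq_sq₀ hk hc, hc2, div_pow, hd2, div_eq_div_iff (by positivity) (by norm_num)]
    constructor
    · intro h
      have h0 : (t - 1) ^ 2 * ((1 + t ^ 2) * (t + 1) ^ 2 + 2 * t ^ 2) = 0 := by linarith
      rcases mul_eq_zero.1 h0 with h1 | h1
      · have := pow_eq_zero_iff (two_ne_zero) |>.1 h1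
        linarith
      · have : 0 < (1 + t ^ 2) * (t + 1) ^ 2 + 2 * t ^ 2 := by positivity
        linarith
    · rintro rfl
      norm_num

/-- For `A > 0` and `y x = log (A - exp x)` on `(-∞, log A)`, the curvature
`κ x = |y'' x| / (1 + (y' x)^2)^(3/2)` attains its global maximum value `2^(-1/2)` uniquely at
`x = log (A / 2)`: for all `x < log A`, `κ x ≤ 1 / √2`, with equality iff `x = log (A / 2)`. -/
theorem curvature_max (A : ℝ) (hA : 0 < A) :
    letI y : ℝ → ℝ := fun x => Real.log (A - Real.exp x)
    letI κ : ℝ → ℝ := fun x =>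
      |iteratedDeriv 2 y x| / (1 + (deriv y x) ^ 2) ^ ((3 : ℝ) / 2)
    ∀ x : ℝ, x < Real.log A →
      κ x ≤ (2 : ℝ) ^ (-(1 : ℝ) / 2) ∧
        (κ x = (2 : ℝ) ^ (-(1 : ℝ) / 2) ↔ x = Real.log (A / 2)) := by
  intro x hx
  let y : ℝ → ℝ := fun x => Real.log (A - Real.exp x)
  let κ : ℝ → ℝ := fun x =>
    |iteratedDeriv 2 y x| / (1 + (deriv y x) ^ 2) ^ ((3 : ℝ) / 2)
  change κ x ≤ (2 : ℝ) ^ (-(1 : ℝ) / 2) ∧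
        (κ x = (2 : ℝ) ^ (-(1 : ℝ) / 2) ↔ x = Real.log (A / 2))
  have hpos : ∀ z, z < Real.log A → 0 < A - Real.exp z := fun z hz => by
    have := (Real.lt_log_iff_exp_lt hA).1 hz
    linarith
  have hd : ∀ z, z < Real.log A → deriv y z = -Real.exp z / (A - Real.exp z) := fun z hz =>
    (((Real.hasDerivAt_exp z).const_sub A).log (hpos z hz).ne').deriv
  have hp := hpos x hx
  have he := Real.exp_pos x
  have hd2 : iteratedDeriv 2 y x =
      -(Real.exp x / (A - Real.exp x) * (1 + Real.exp x / (A - Real.exp x))) := by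
    rw [iteratedDeriv_succ, iteratedDeriv_one]
    have hev : deriv y =ᶠ[nhds x] fun z => -Real.exp z / (A - Real.exp z) := by
      filter_upwards [Iio_mem_nhds hx] with z hz using hd z hz
    rw [hev.deriv_eq]
    have h := ((Real.hasDerivAt_exp x).neg).div ((Real.hasDerivAt_exp x).const_sub A) hp.ne'
    refine h.deriv.trans ?_
    simp only [Pi.neg_apply]
    field_simp
    ring
  set t := Real.exp x / (A - Real.exp x) with ht
  have htp : 0 < t := by positivity
  have hκ : κ x = t * (1 + t) / (1 + t ^ 2) ^ ((3 : ℝ) / 2) := by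
    change |iteratedDeriv 2 y x| / (1 + (deriv y x) ^ 2) ^ ((3 : ℝ) / 2) = _
    rw [hd2, hd x hx, abs_neg, abs_of_pos (by positivity), neg_div, neg_sq]
  have hx1 : t = 1 ↔ x = Real.log (A / 2) := by
    rw [ht, div_eq_one_iff_eq hp.ne']
    constructor
    · intro h
      rw [show A / 2 = Real.exp x by linarith, Real.log_exp]
    · intro h
      have : Real.exp x = A / 2 := by rw [h, Real.exp_log (by positivity)]
      linarith
  rw [hκ, ← hx1]
  exact curv_aux t htp
end
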